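/- For all integers Z ≥ 1, F ≥ Z + 1, every integer ℓ ≥ 1, and every integer x with 0 ≤ x ≤ ⌈(Z + 1)/(F − Z)⌉ − 1, one has s(F, ℓ·C(F, Z) − x, Z) = ℓ·C(F, Z+1) = ℓ·C(F, Z)·(F − Z)/(Z + 1). -/

import Mathlib

open scoped Classical

/-- A placement delivery array with parameters `(F, K, Z)` over alphabet `S`:
an `F × K` array of cells that are either empty (`none`) or an element of `S`,
such that each column has exactly `Z` empty cells, no element occurs twice in a
row or in a column, and two equal entries in positions `(j₁,k₁)`, `(j₂,k₂)`
force the cells `(j₁,k₂)` and `(j₂,k₁)` to be empty. -/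
def IsPDA {S : Type} (F K Z : ℕ) (A : Fin F → Fin K → Option S) : Prop :=
  (∀ k : Fin K, (Finset.univ.filter fun j : Fin F => A j k = none).card = Z) ∧
  (∀ (j : Fin F) (k₁ k₂ : Fin K) (t : S), A j k₁ = some t → A j k₂ = some t → k₁ = k₂) ∧
  (∀ (j₁ j₂ : Fin F) (k : Fin K) (t : S), A j₁ k = some t → A j₂ k = some t → j₁ = j₂) ∧
  (∀ (j₁ j₂ : Fin F) (k₁ k₂ : Fin K) (t : S), j₁ ≠ j₂ → k₁ ≠ k₂ →
      A j₁ k₁ = some t → A j₂ k₂ = some t → A j₁ k₂ = none ∧ A j₂ k₁ = none)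

/-- `sPDA F K Z` is the minimum size of an alphabet `S` for which an `S`-PDA with
parameters `(F, K, Z)` exists. -/
noncomputable def sPDA (F K Z : ℕ) : ℕ :=
  sInf {n : ℕ | ∃ A : Fin F → Fin K → Option (Fin n), IsPDA F K Z A}

/-!
Count pairs (column, symbol occurring in it). Every column holds `F - Z` symbols. If a symbol sits
in cell `(j₀, k₀)`, each of its other occurrences lies in a row where column `k₀` is empty, so it
occurs in at most `Z + 1` columns. Hence `K * (F - Z) ≤ |S| * (Z + 1)`.

Conversely, index the columns by `ℓ` copies of the `Z`-subsets `s` of the rows and the symbols by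
`ℓ` copies of the `(Z + 1)`-subsets, and put `insert j s` in row `j ∉ s` of column `s`. This attains
the bound, and deleting `x` columns weakens the bound by `x * (F - Z) < Z + 1`, too little to save a
symbol.
-/

namespace IsPDA

variable {S : Type} {F K Z : ℕ} {A : Fin F → Fin K → Option S}

theorem map {T : Type} {f : S → T} (hf : Function.Injective f) (hA : IsPDA F K Z A) :
    IsPDA F K Z fun j k => (A j k).map f := by
  obtain ⟨empty_card, row_inj, col_inj, cross_empty⟩ := hA
  simp only [IsPDA, Option.map_eq_none_iff, Option.map_eq_some_iff]
  refine ⟨empty_card, ?_, ?_, ?_⟩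
  · rintro j k₁ k₂ _ ⟨t, h₁, rfl⟩ ⟨t', h₂, ht⟩
    exact row_inj j k₁ k₂ t h₁ (hf ht ▸ h₂)
  · rintro j₁ j₂ k _ ⟨t, h₁, rfl⟩ ⟨t', h₂, ht⟩
    exact col_inj j₁ j₂ k t h₁ (hf ht ▸ h₂)
  · rintro j₁ j₂ k₁ k₂ _ hj hk ⟨t, h₁, rfl⟩ ⟨t', h₂, ht⟩
    exact cross_empty j₁ j₂ k₁ k₂ t hj hk h₁ (hf ht ▸ h₂)

theorem card_filter_ne_none (hA : IsPDA F K Z A) (k : Fin K) :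
    (Finset.univ.filter fun j => A j k ≠ none).card = F - Z := by
  have h := Finset.card_filter_add_card_filter_not (s := Finset.univ) fun j => A j k = none
  rw [hA.1 k, Finset.card_univ, Fintype.card_fin] at h
  exact Nat.eq_sub_of_add_eq' h

theorem sub_le_card_symbols_of_column [Fintype S] (hA : IsPDA F K Z A) (k : Fin K) :
    F - Z ≤ (Finset.univ.filter fun t => ∃ j, A j k = some t).card := by
  rw [← hA.card_filter_ne_none k]
  refine Finset.card_le_card_of_forall_subsingleton (fun j t => A j k = some t) ?_ ?_
  · intro j hj
    obtain ⟨t, ht⟩ := Option.ne_none_iff_exists'.1 (Finset.mem_filter.1 hj).2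
    exact ⟨t, Finset.mem_filter.2 ⟨Finset.mem_univ t, j, ht⟩, ht⟩
  · rintro t - j₁ ⟨-, h₁⟩ j₂ ⟨-, h₂⟩
    exact hA.2.2.1 j₁ j₂ k t h₁ h₂

theorem card_columns_of_symbol_le (hA : IsPDA F K Z A) (t : S) :
    (Finset.univ.filter fun k => ∃ j, A j k = some t).card ≤ Z + 1 := by
  rcases (Finset.univ.filter fun k => ∃ j, A j k = some t).eq_empty_or_nonempty with
    h_empty | ⟨k₀, hk₀⟩
  · simp [h_empty]
  obtain ⟨j₀, h₀⟩ := (Finset.mem_filter.1 hk₀).2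
  rw [← hA.1 k₀]
  refine le_trans ?_ (Finset.card_insert_le j₀ _)
  refine Finset.card_le_card_of_forall_subsingleton (fun k j => A j k = some t) ?_ ?_
  · intro k hk
    obtain ⟨j, h⟩ := (Finset.mem_filter.1 hk).2
    refine ⟨j, ?_, h⟩
    by_cases hj : j = j₀
    · exact hj ▸ Finset.mem_insert_self j _
    · have hk_ne : k ≠ k₀ := fun hkk => hj (hA.2.2.1 j j₀ k₀ t (hkk ▸ h) h₀)
      have h_none : A j k₀ = none := (hA.2.2.2 j j₀ k k₀ t hj hk_ne h h₀).1
      exact Finset.mem_insert_of_mem (Finset.mem_filter.2 ⟨Finset.mem_univ j, h_none⟩)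
  · rintro j - k₁ ⟨-, h₁⟩ k₂ ⟨-, h₂⟩
    exact hA.2.1 j k₁ k₂ t h₁ h₂

theorem mul_sub_le_card_mul_succ [Fintype S] (hA : IsPDA F K Z A) :
    K * (F - Z) ≤ Fintype.card S * (Z + 1) := by
  simpa using Finset.card_mul_le_card_mul (s := Finset.univ) (t := Finset.univ)
    (fun k t => ∃ j, A j k = some t)
    (fun k _ => hA.sub_le_card_symbols_of_column k) (fun t _ => hA.card_columns_of_symbol_le t)

theorem exists_fin_card [Fintype S] (hA : IsPDA F K Z A) :
    ∃ B : Fin F → Fin K → Option (Fin (Fintype.card S)), IsPDA F K Z B :=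
  ⟨_, hA.map (Fintype.equivFin S).injective⟩

theorem sPDA_le_card [Fintype S] (hA : IsPDA F K Z A) : sPDA F K Z ≤ Fintype.card S :=
  Nat.sInf_le hA.exists_fin_card

theorem mul_sub_le_sPDA_mul_succ [Finite S] (hA : IsPDA F K Z A) :
    K * (F - Z) ≤ sPDA F K Z * (Z + 1) := by
  have := Fintype.ofFinite S
  have h_attained : sPDA F K Z ∈ {n | ∃ B : Fin F → Fin K → Option (Fin n), IsPDA F K Z B} :=
    Nat.sInf_mem ⟨_, hA.exists_fin_card⟩
  obtain ⟨B, hB⟩ := h_attained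
  simpa using hB.mul_sub_le_card_mul_succ

end IsPDA

section SubsetArray

variable {ι : Type} {F K Z : ℕ} {col : Fin K → ι × {s : Finset (Fin F) // s.card = Z}}
  {j j₁ j₂ : Fin F} {k k₁ k₂ : Fin K} {t : ι × {s : Finset (Fin F) // s.card = Z + 1}}

/-- The Maddah-Ali–Niesen array, in copies indexed by `ι`: the column labelled `(i, s)` is empty in
the rows of `s` and carries the symbol `(i, insert j s)` in each row `j ∉ s`. The labelling `col`
selects which columns, from which copies, are present. -/
def subsetArray (col : Fin K → ι × {s : Finset (Fin F) // s.card = Z}) (j : Fin F) (k : Fin K) :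
    Option (ι × {s : Finset (Fin F) // s.card = Z + 1}) :=
  if hj : j ∈ (col k).2.1 then none
  else some ((col k).1, ⟨insert j (col k).2.1, by
    rw [Finset.card_insert_of_notMem hj, (col k).2.2]⟩)

theorem subsetArray_eq_none_iff : subsetArray col j k = none ↔ j ∈ (col k).2.1 := by
  simp [subsetArray]

theorem subsetArray_eq_some_iff :
    subsetArray col j k = some t ↔
      j ∉ (col k).2.1 ∧ (col k).1 = t.1 ∧ insert j (col k).2.1 = t.2.1 := by
  by_cases hj : j ∈ (col k).2.1 <;> simp [subsetArray, hj, Prod.ext_iff, Subtype.ext_iff]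

theorem column_label_eq_of_subsetArray_eq_some (h₁ : subsetArray col j k₁ = some t)
    (h₂ : subsetArray col j k₂ = some t) : col k₁ = col k₂ := by
  obtain ⟨hj₁, hi₁, ht₁⟩ := subsetArray_eq_some_iff.1 h₁
  obtain ⟨hj₂, hi₂, ht₂⟩ := subsetArray_eq_some_iff.1 h₂
  refine Prod.ext (hi₁.trans hi₂.symm) (Subtype.ext ?_)
  rw [← Finset.erase_insert hj₁, ht₁, ← ht₂, Finset.erase_insert hj₂]

theorem subsetArray_eq_none_of_eq_some (hj : j₁ ≠ j₂) (h₁ : subsetArray col j₁ k₁ = some t)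
    (h₂ : subsetArray col j₂ k₂ = some t) : subsetArray col j₁ k₂ = none := by
  obtain ⟨-, -, ht₁⟩ := subsetArray_eq_some_iff.1 h₁
  obtain ⟨-, -, ht₂⟩ := subsetArray_eq_some_iff.1 h₂
  have hmem : j₁ ∈ insert j₂ (col k₂).2.1 := by
    rw [ht₂, ← ht₁]
    exact Finset.mem_insert_self j₁ _
  exact subsetArray_eq_none_iff.2 (Finset.mem_of_mem_insert_of_ne hmem hj)

theorem isPDA_subsetArray (hcol : Function.Injective col) : IsPDA F K Z (subsetArray col) := by
  refine ⟨fun k => ?_, fun j k₁ k₂ t h₁ h₂ => ?_, fun j₁ j₂ k t h₁ h₂ => ?_,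
    fun j₁ j₂ k₁ k₂ t hj _ h₁ h₂ => ?_⟩
  · simpa [subsetArray_eq_none_iff] using (col k).2.2
  · exact hcol (column_label_eq_of_subsetArray_eq_some h₁ h₂)
  · by_contra hj
    simp [subsetArray_eq_none_of_eq_some hj h₁ h₂] at h₁
  · exact ⟨subsetArray_eq_none_of_eq_some hj h₁ h₂, subsetArray_eq_none_of_eq_some hj.symm h₂ h₁⟩

end SubsetArray

theorem mul_choose_mul_sub_eq (F Z ℓ : ℕ) :
    ℓ * F.choose Z * (F - Z) = ℓ * F.choose (Z + 1) * (Z + 1) := by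
  rw [mul_assoc, mul_assoc, Nat.choose_succ_right_eq]

theorem sPDA_mul_choose_sub_eq {F Z ℓ x : ℕ} (hx : x * (F - Z) < Z + 1) :
    sPDA F (ℓ * F.choose Z - x) Z = ℓ * F.choose (Z + 1) := by
  obtain ⟨col⟩ : Nonempty
      (Fin (ℓ * F.choose Z - x) ↪ Fin ℓ × {s : Finset (Fin F) // s.card = Z}) :=
    Function.Embedding.nonempty_of_card_le (by simp)
  have hA := isPDA_subsetArray col.injective
  apply le_antisymm
  · simpa using hA.sPDA_le_card
  · have h_count := hA.mul_sub_le_sPDA_mul_succ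
    rw [Nat.sub_mul, mul_choose_mul_sub_eq] at h_count
    have h_lt : ℓ * F.choose (Z + 1) * (Z + 1) <
        (sPDA F (ℓ * F.choose Z - x) Z + 1) * (Z + 1) := by
      rw [add_one_mul (sPDA _ _ _)]
      omega
    exact Nat.lt_succ_iff.1 (Nat.lt_of_mul_lt_mul_right h_lt)

theorem mul_lt_of_le_ceil_div_sub_one {a d x : ℕ} (ha : 0 < a) (hd : 0 < d)
    (hx : x ≤ ⌈(a : ℚ) / d⌉₊ - 1) : x * d < a := by
  have h_ceil_pos : 0 < ⌈(a : ℚ) / d⌉₊ := Nat.ceil_pos.2 (by positivity)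
  have h_lt : (x : ℚ) < a / d := Nat.lt_ceil.1 (by omega)
  exact_mod_cast (lt_div_iff₀ (by positivity)).1 h_lt

theorem stmt_13 (F Z ℓ x : ℕ) (hZ : 1 ≤ Z) (hF : Z + 1 ≤ F) (hℓ : 1 ≤ ℓ)
    (hx : x ≤ ⌈((Z : ℚ) + 1) / ((F - Z : ℕ) : ℚ)⌉₊ - 1) :
    sPDA F (ℓ * F.choose Z - x) Z = ℓ * F.choose (Z + 1) ∧
    ℓ * F.choose (Z + 1) = ℓ * F.choose Z * (F - Z) / (Z + 1) := by
  have hx' : x * (F - Z) < Z + 1 :=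
    mul_lt_of_le_ceil_div_sub_one Z.succ_pos (Nat.sub_pos_of_lt hF) (by exact_mod_cast hx)
  refine ⟨sPDA_mul_choose_sub_eq hx', ?_⟩
  rw [mul_choose_mul_sub_eq, Nat.mul_div_cancel _ Z.succ_pos]
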